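/- arXiv:2206.09014 — 2 statements merged into one kernel-verified Lean document; each statement's English description precedes it below -/
import Mathlib

section
/- Let T_e denote the bounded operator on L²(X,μ) given by T_e φ = Φ_{f_e⁻¹}^{1/2}·(φ∘f_e⁻¹) on R_e and 0 elsewhere, and P_v = M_{χ_{D_v}}. Then: (i) for every v ∈ G⁰ \ V, P_v − Σ_{e ∈ s⁻¹(v)} T_e T_e* equals the multiplication operator by the indicator of D_v \ ⋃_{e ∈ s⁻¹(v)} R_e; and (ii) for every e ∈ G¹ with r(e) = v ∉ V, the operator T_e ∘ (Σ_{f ∈ s⁻¹(v)} T_f T_f*) sends each φ ∈ L²(X,μ) to the function agreeing μ-a.e. with χ_{Q_e}·Φ_{f_e⁻¹}^{1/2}·(φ∘f_e⁻¹), where Q_e = (f_e⁻¹)⁻¹(⋃_{f ∈ s⁻¹(v)} R_f). -/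
open MeasureTheory Set
open scoped ENNReal NNReal

section

variable {V0 E1 X : Type*}

/-- A relative `G`-branching system, relative to a set `V` of vertices, on a measure space
`(X, μ)`, for a directed graph with vertices `V0`, edges `E1`, range map `r` and source map
`s`. The data consists of measurable sets `R e` (for edges) and `D v` (for vertices),
together with measurable maps `f e : D (r e) → R e` and `finv e : R e → D (r e)` that are
mutually inverse `μ`-a.e. and whose pushforward measures are absolutely continuous w.r.t.
`μ`. -/
structure RelBranchingSystem [MeasurableSpace X] (r s : E1 → V0) (V : Set V0)
    (μ : Measure X) (R : E1 → Set X) (D : V0 → Set X) (f finv : E1 → X → X) : Prop where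
  measR : ∀ e, MeasurableSet (R e)
  measD : ∀ v, MeasurableSet (D v)
  measf : ∀ e, Measurable (f e)
  measfinv : ∀ e, Measurable (finv e)
  disjR : ∀ e e', e ≠ e' → μ (R e ∩ R e') = 0
  disjD : ∀ u v, u ≠ v → μ (D u ∩ D v) = 0
  RsubD : ∀ e, μ (R e \ D (s e)) = 0
  CK : ∀ v ∈ V, (∃ e, s e = v) → μ (symmDiff (D v) (⋃ e ∈ {e' | s e' = v}, R e)) = 0
  mapsf : ∀ e, MapsTo (f e) (D (r e)) (R e)
  mapsfinv : ∀ e, MapsTo (finv e) (R e) (D (r e))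
  inv_right : ∀ e, ∀ᵐ x ∂μ.restrict (R e), f e (finv e x) = x
  inv_left : ∀ e, ∀ᵐ t ∂μ.restrict (D (r e)), finv e (f e t) = t
  ac_f : ∀ e, (μ.restrict (D (r e))).map (f e) ≪ μ
  ac_finv : ∀ e, (μ.restrict (R e)).map (finv e) ≪ μ

/-- The Radon–Nikodym derivative of the pushforward of `μ` restricted to `S` under `h`,
with respect to `μ`.  Taking `S = D (r e)`, `h = f e` gives `Φ_{f_e⁻¹}`, and taking
`S = R e`, `h = finv e` gives `Φ_{f_e}`. -/
noncomputable def pushDeriv [MeasurableSpace X] (μ : Measure X) (S : Set X) (h : X → X) :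
    X → ℝ≥0∞ :=
  ((μ.restrict S).map h).rnDeriv μ

/-- The function `x ↦ χ_{R e}(x) · Φ_{f_e⁻¹}(x)^{1/2} · φ(f_e⁻¹ x)`, i.e. the prospective
action of the partial isometry `T_e` on a function `φ`. -/
noncomputable def Taction [MeasurableSpace X] (μ : Measure X) (Re DRe : Set X)
    (fe finve : X → X) (φ : X → ℂ) : X → ℂ :=
  Re.indicator fun x => (Real.sqrt ((pushDeriv μ DRe fe x).toReal) : ℂ) * φ (finve x)

lemma aux_sigmaFinite [MeasurableSpace X] {μ : Measure X} [SigmaFinite μ] {D : Set X}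
    {f g : X → X} (hf : Measurable f) (hg : Measurable g)
    (hl : ∀ᵐ t ∂μ.restrict D, g (f t) = t) : SigmaFinite ((μ.restrict D).map f) := by
  have hmap : ((μ.restrict D).map f).map g = μ.restrict D := by
    rw [Measure.map_map hg hf]
    have : (g ∘ f) =ᵐ[μ.restrict D] id := hl
    rw [Measure.map_congr this, Measure.map_id]
  have : SigmaFinite (((μ.restrict D).map f).map g) := by rw [hmap]; infer_instance
  exact SigmaFinite.of_map _ hg.aemeasurable this

lemma aux_TTstar [MeasurableSpace X] {μ : Measure X} [SigmaFinite μ]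
    {R D : Set X} {f g : X → X} (hR : MeasurableSet R) (hD : MeasurableSet D)
    (hf : Measurable f) (hg : Measurable g)
    (hfm : MapsTo f D R) (hgm : MapsTo g R D)
    (hr : ∀ᵐ x ∂μ.restrict R, f (g x) = x)
    (hl : ∀ᵐ t ∂μ.restrict D, g (f t) = t)
    (acf : (μ.restrict D).map f ≪ μ) (acg : (μ.restrict R).map g ≪ μ)
    (T : Lp ℂ 2 μ →L[ℂ] Lp ℂ 2 μ)
    (hT : ∀ φ : Lp ℂ 2 μ, ⇑(T φ) =ᵐ[μ] Taction μ R D f g ⇑φ) (ψ : Lp ℂ 2 μ) :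
    ⇑(T (ContinuousLinearMap.adjoint T ψ)) =ᵐ[μ] R.indicator fun x => (ψ : X → ℂ) x := by
  have hsf := aux_sigmaFinite (μ := μ) hf hg hl
  set ν := (μ.restrict D).map f with hν
  set Φ : X → ℝ≥0∞ := pushDeriv μ D f with hΦ
  have hΦm : Measurable Φ := Measure.measurable_rnDeriv _ _
  have hwd : μ.withDensity Φ = ν := Measure.withDensity_rnDeriv_eq ν μ acf
  have hΦtop : ∀ᵐ x ∂μ, Φ x < ∞ := Measure.rnDeriv_lt_top ν μ
  have hψm : Measurable (ψ : X → ℂ) := (Lp.stronglyMeasurable ψ).measurable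
  -- vanishing off `R`
  have hoff : ∀ᵐ x ∂μ, x ∉ R → Φ x = 0 := by
    have h0 : ν Rᶜ = 0 := by
      rw [hν, Measure.map_apply hf hR.compl, Measure.restrict_apply (hf hR.compl)]
      have : f ⁻¹' Rᶜ ∩ D = ∅ := by
        ext t
        simp only [mem_inter_iff, mem_preimage, mem_compl_iff, mem_empty_iff_false, iff_false]
        exact fun h => h.1 (hfm h.2)
      rw [this, measure_empty]
    rw [← hwd, withDensity_apply _ hR.compl, lintegral_eq_zero_iff hΦm] at h0
    exact (ae_restrict_iff' hR.compl).1 h0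
  -- positivity on `R`
  have hpos : ∀ᵐ x ∂μ, x ∈ R → Φ x ≠ 0 := by
    have hA : MeasurableSet {x | Φ x = 0} := hΦm (measurableSet_singleton 0)
    have h0 : ν {x | Φ x = 0} = 0 := by
      rw [← hwd, withDensity_apply _ hA, lintegral_eq_zero_iff hΦm]
      exact (ae_restrict_iff' hA).2 (Filter.Eventually.of_forall fun x hx => hx)
    have h1 : ∀ᵐ t ∂μ.restrict D, Φ (f t) ≠ 0 := by
      have : ∀ᵐ x ∂ν, Φ x ≠ 0 := by
        rw [ae_iff]; simpa using h0
      exact ae_of_ae_map hf.aemeasurable this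
    have h2 : ∀ᵐ t ∂μ, t ∈ D → Φ (f t) ≠ 0 := (ae_restrict_iff' hD).1 h1
    have h3 : ∀ᵐ x ∂μ.restrict R, g x ∈ D → Φ (f (g x)) ≠ 0 :=
      ae_of_ae_map hg.aemeasurable (acg.ae_le h2)
    have h4 : ∀ᵐ x ∂μ, x ∈ R → (g x ∈ D → Φ (f (g x)) ≠ 0) := (ae_restrict_iff' hR).1 h3
    have h5 : ∀ᵐ x ∂μ, x ∈ R → f (g x) = x := (ae_restrict_iff' hR).1 hr
    filter_upwards [h4, h5] with x h4 h5 hx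
    have := h4 hx (hgm hx)
    rwa [h5 hx] at this
  set q : X → ℂ := fun x => (Real.sqrt ((Φ x).toReal) : ℂ) with hq
  have hqm : Measurable q :=
    Complex.measurable_ofReal.comp (hΦm.ennreal_toReal.sqrt)
  set k : X → ℂ := fun x => ψ x / q x with hk
  have hkm : Measurable k := hψm.div hqm
  have hkL : MemLp k 2 ν := by
    refine ⟨hkm.aestronglyMeasurable, ?_⟩
    rw [eLpNorm_lt_top_iff_lintegral_rpow_enorm_lt_top (by norm_num) (by norm_num), ← hwd,
      lintegral_withDensity_eq_lintegral_mul _ hΦm (by fun_prop)]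
    have hψL := (Lp.memLp ψ).2
    rw [eLpNorm_lt_top_iff_lintegral_rpow_enorm_lt_top (by norm_num) (by norm_num)] at hψL
    refine lt_of_le_of_lt (lintegral_mono_ae ?_) hψL
    filter_upwards [hΦtop] with x hx
    simp only [Pi.mul_apply, ENNReal.toReal_ofNat, ENNReal.rpow_ofNat]
    rcases eq_or_ne (Φ x) 0 with h | h
    · simp [h]
    · have hp : 0 < (Φ x).toReal := ENNReal.toReal_pos h hx.ne
      have e1 : Φ x = ‖q x‖ₑ ^ 2 := by
        rw [← ofReal_norm_eq_enorm, ← ENNReal.ofReal_pow (norm_nonneg _), hq]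
        simp only [Complex.norm_real, Real.norm_eq_abs, sq_abs]
        rw [Real.sq_sqrt hp.le, ENNReal.ofReal_toReal hx.ne]
      have e2 : q x ≠ 0 := by
        simp only [hq, ne_eq, Complex.ofReal_eq_zero]
        exact (Real.sqrt_pos.2 hp).ne'
      rw [e1, ← mul_pow, ← enorm_mul, hk]
      simp only
      rw [mul_div_cancel₀ _ e2]
  have hφL : MemLp (D.indicator (k ∘ f)) 2 μ := by
    rw [memLp_indicator_iff_restrict hD]
    exact (memLp_map_measure_iff hkm.aestronglyMeasurable hf.aemeasurable).1 hkL
  set φ : Lp ℂ 2 μ := hφL.toLp _ with hφ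
  have hφe : ⇑φ =ᵐ[μ] D.indicator (k ∘ f) := hφL.coeFn_toLp
  have hadj : ContinuousLinearMap.adjoint T ψ = φ := by
    refine ext_inner_right ℂ fun η => ?_
    rw [ContinuousLinearMap.adjoint_inner_left, L2.inner_def, L2.inner_def]
    have hηm : Measurable (η : X → ℂ) := (Lp.stronglyMeasurable η).measurable
    set G : X → ℂ := fun x => inner ℂ (k x) (η (g x)) with hG
    have hGm : Measurable G := by
      have := hηm.comp hg
      exact hkm.inner this
    have s1 : ∫ a, inner ℂ (φ a) (η a) ∂μ = ∫ t in D, G (f t) ∂μ := by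
      rw [← integral_indicator hD]
      refine integral_congr_ae ?_
      filter_upwards [hφe, (ae_restrict_iff' hD).1 hl] with t h1 h2
      rw [h1]
      by_cases ht : t ∈ D
      · simp [ht, hG, h2 ht]
      · simp [ht]
    have s2 : ∫ t in D, G (f t) ∂μ = ∫ x, G x ∂ν :=
      (integral_map hf.aemeasurable hGm.aestronglyMeasurable).symm
    rw [s1, s2, ← hwd, integral_withDensity_eq_integral_toReal_smul hΦm hΦtop]
    refine integral_congr_ae ?_
    filter_upwards [hT η, hoff, hpos, hΦtop] with x h1 h2 h3 h4
    rw [h1]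
    by_cases hx : x ∈ R
    · have hp : 0 < (Φ x).toReal := ENNReal.toReal_pos (h3 hx) h4.ne
      have e2 : (Real.sqrt (Φ x).toReal : ℂ) ≠ 0 := by
        simp only [ne_eq, Complex.ofReal_eq_zero]
        exact (Real.sqrt_pos.2 hp).ne'
      have e3 : ((Φ x).toReal : ℂ) = (Real.sqrt (Φ x).toReal : ℂ) * Real.sqrt (Φ x).toReal := by
        rw [← Complex.ofReal_mul, Real.mul_self_sqrt hp.le]
      simp only [Taction, indicator_of_mem hx, hG, hk, hq, RCLike.inner_apply, map_div₀,
        Complex.conj_ofReal, Complex.real_smul]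
      rw [e3, ← hΦ]
      field_simp
    · simp [Taction, hx, h2 hx]
  rw [hadj]
  have hpb : ∀ᵐ x ∂μ.restrict R, φ (g x) = D.indicator (k ∘ f) (g x) :=
    ae_of_ae_map hg.aemeasurable (acg.ae_le hφe)
  filter_upwards [hT φ, hpos, hΦtop, (ae_restrict_iff' hR).1 hpb,
    (ae_restrict_iff' hR).1 hr] with x h1 h3 h4 h5 h6
  rw [h1]
  by_cases hx : x ∈ R
  · have hp : 0 < (Φ x).toReal := ENNReal.toReal_pos (h3 hx) h4.ne
    have e2 : (Real.sqrt (Φ x).toReal : ℂ) ≠ 0 := by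
      simp only [ne_eq, Complex.ofReal_eq_zero]
      exact (Real.sqrt_pos.2 hp).ne'
    simp only [Taction, indicator_of_mem hx, h5 hx, indicator_of_mem (hgm hx),
      Function.comp_apply, h6 hx, hk, hq]
    rw [← hΦ, mul_div_cancel₀ _ e2]
  · simp [Taction, hx]

lemma aux_sum [MeasurableSpace X] {μ : Measure X} [Fintype E1] [DecidableEq V0]
    (s : E1 → V0) (R : E1 → Set X) (hdis : ∀ e e', e ≠ e' → μ (R e ∩ R e') = 0)
    (A : E1 → (Lp ℂ 2 μ →L[ℂ] Lp ℂ 2 μ))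
    (φ : Lp ℂ 2 μ)
    (hA : ∀ e, ⇑(A e φ) =ᵐ[μ] (R e).indicator fun x => (φ : X → ℂ) x) (v : V0) :
    ⇑((∑ e ∈ Finset.univ.filter (fun e => s e = v), A e) φ) =ᵐ[μ]
      (⋃ e ∈ {e' | s e' = v}, R e).indicator fun x => (φ : X → ℂ) x := by
  have h1 : ∀ᵐ x ∂μ, ∀ e, A e φ x = (R e).indicator (fun x => (φ : X → ℂ) x) x :=
    ae_all_iff.2 hA
  have h2 : ∀ᵐ x ∂μ, ∀ e e', e ≠ e' → ¬ (x ∈ R e ∩ R e') := by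
    refine ae_all_iff.2 fun e => ae_all_iff.2 fun e' => ?_
    by_cases h : e = e'
    · simp [h]
    · filter_upwards [measure_eq_zero_iff_ae_notMem.1 (hdis e e' h)] with x hx _ using hx
  rw [ContinuousLinearMap.sum_apply]
  have h3 : ⇑(∑ e ∈ Finset.univ.filter (fun e => s e = v), A e φ) =ᵐ[μ]
      fun x => ∑ e ∈ Finset.univ.filter (fun e => s e = v), A e φ x :=
    Lp.coeFn_fun_finsetSum _ _
  have hmem : ∀ x, x ∈ (⋃ e ∈ {e' | s e' = v}, R e) ↔ ∃ e, s e = v ∧ x ∈ R e := by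
    intro x; simp
  generalize (⋃ e ∈ {e' | s e' = v}, R e) = U at hmem ⊢
  filter_upwards [h1, h2, h3] with x h1 h2 h3
  rw [h3]
  simp only [h1]
  by_cases hx : x ∈ U
  · rw [indicator_of_mem hx]
    obtain ⟨e, he, hxe⟩ := (hmem x).1 hx
    rw [Finset.sum_eq_single e, indicator_of_mem hxe]
    · intro e' _ hne
      exact indicator_of_notMem (fun h => h2 e' e hne ⟨h, hxe⟩) _
    · intro h
      simp [he] at h
  · rw [indicator_of_notMem hx]
    refine Finset.sum_eq_zero fun e he => indicator_of_notMem (fun h => hx ?_) _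
    exact (hmem x).2 ⟨e, by simpa using he, h⟩

/-- (i) For every `v ∉ V`, `P v − Σ_{e : s e = v} T_e T_e*` is the
multiplication operator by the indicator of `D v \ ⋃_{e : s e = v} R e`;  (ii) for every
edge `e` with `r e = v ∉ V`, the operator `T_e ∘ (Σ_{f : s f = v} T_f T_f*)` sends `φ` to
the function agreeing `μ`-a.e. with `χ_{Q_e} · Φ_{f_e⁻¹}^{1/2} · (φ ∘ f_e⁻¹)`, where
`Q_e = (f_e⁻¹)⁻¹ (⋃_{f : s f = v} R f)` (the preimage being taken inside the domain
`R e` of `f_e⁻¹`). -/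
theorem statement6 [MeasurableSpace X] {μ : Measure X} [SigmaFinite μ]
    (r s : E1 → V0) [Fintype V0] [Fintype E1] [DecidableEq V0] (V : Set V0)
    (R : E1 → Set X) (D : V0 → Set X) (f finv : E1 → X → X)
    (hbs : RelBranchingSystem r s V μ R D f finv)
    (T : E1 → (Lp ℂ 2 μ →L[ℂ] Lp ℂ 2 μ))
    (hT : ∀ e, ∀ φ : Lp ℂ 2 μ, ⇑(T e φ) =ᵐ[μ] Taction μ (R e) (D (r e)) (f e) (finv e) ⇑φ)
    (P : V0 → (Lp ℂ 2 μ →L[ℂ] Lp ℂ 2 μ))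
    (hP : ∀ v, ∀ φ : Lp ℂ 2 μ, ⇑(P v φ) =ᵐ[μ] (D v).indicator fun x => (φ : X → ℂ) x) :
    (∀ v, v ∉ V → ∀ φ : Lp ℂ 2 μ,
      ⇑((P v - ∑ e ∈ Finset.univ.filter (fun e => s e = v),
          T e ∘L ContinuousLinearMap.adjoint (T e)) φ) =ᵐ[μ]
        (D v \ ⋃ e ∈ {e' | s e' = v}, R e).indicator fun x => (φ : X → ℂ) x) ∧
    (∀ e, r e ∉ V → ∀ φ : Lp ℂ 2 μ,
      ⇑((T e ∘L ∑ f' ∈ Finset.univ.filter (fun f' => s f' = r e),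
          T f' ∘L ContinuousLinearMap.adjoint (T f')) φ) =ᵐ[μ]
        (R e ∩ finv e ⁻¹' (⋃ f' ∈ {f'' | s f'' = r e}, R f')).indicator fun x =>
          (Real.sqrt ((pushDeriv μ (D (r e)) (f e) x).toReal) : ℂ) *
            (φ : X → ℂ) (finv e x)) := by
  have hA : ∀ e, ∀ φ : Lp ℂ 2 μ, ⇑((T e ∘L ContinuousLinearMap.adjoint (T e)) φ) =ᵐ[μ]
      (R e).indicator fun x => (φ : X → ℂ) x := fun e φ =>
    aux_TTstar (hbs.measR e) (hbs.measD _) (hbs.measf e) (hbs.measfinv e) (hbs.mapsf e)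
      (hbs.mapsfinv e) (hbs.inv_right e) (hbs.inv_left e) (hbs.ac_f e) (hbs.ac_finv e)
      (T e) (hT e) φ
  have hS := fun (φ : Lp ℂ 2 μ) (v : V0) => aux_sum s R hbs.disjR
    (fun e => T e ∘L ContinuousLinearMap.adjoint (T e)) φ (fun e => hA e φ) v
  constructor
  · intro v _ φ
    rw [ContinuousLinearMap.sub_apply]
    have hsub : ∀ᵐ x ∂μ, ∀ e, x ∈ R e → x ∈ D (s e) := by
      refine ae_all_iff.2 fun e => ?_
      filter_upwards [measure_eq_zero_iff_ae_notMem.1 (hbs.RsubD e)] with x hx h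
      by_contra h'
      exact hx ⟨h, h'⟩
    have hUD : ∀ᵐ x ∂μ, x ∈ (⋃ e ∈ {e' | s e' = v}, R e) → x ∈ D v := by
      filter_upwards [hsub] with x h4
      simp only [mem_iUnion, exists_prop]
      rintro ⟨e, rfl, hx⟩
      exact h4 e hx
    have hSv := hS φ v
    generalize (⋃ e ∈ {e' | s e' = v}, R e) = U at hUD hSv ⊢
    filter_upwards [Lp.coeFn_sub (P v φ) ((∑ e ∈ Finset.univ.filter (fun e => s e = v),
          T e ∘L ContinuousLinearMap.adjoint (T e)) φ), hP v φ, hSv, hUD] with x h1 h2 h3 hUD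
    rw [h1, Pi.sub_apply, h2, h3]
    by_cases hU : x ∈ U
    · have := hUD hU
      simp [hU, this]
    · by_cases hD : x ∈ D v <;> simp [hU, hD]
  · intro e _ φ
    rw [ContinuousLinearMap.comp_apply]
    have hpb := (ae_restrict_iff' (hbs.measR e)).1
      (ae_of_ae_map (hbs.measfinv e).aemeasurable ((hbs.ac_finv e).ae_le (hS φ (r e))))
    generalize (⋃ f' ∈ {f'' | s f'' = r e}, R f') = U at hpb ⊢
    filter_upwards [hT e ((∑ f' ∈ Finset.univ.filter (fun f' => s f' = r e),
          T f' ∘L ContinuousLinearMap.adjoint (T f')) φ), hpb] with x h1 h2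
    rw [h1]
    by_cases hx : x ∈ R e
    · rw [Taction, indicator_of_mem hx, h2 hx]
      by_cases hU : finv e x ∈ U <;> simp [hU, hx]
    · simp [Taction, hx]

end
end

section
/- Let g be a Markov interval map with g(Γ ∩ dom(g)) ⊆ Γ, let x ∈ E_g, let V ⊆ {1,…,n} be such that â_{i ι(x)} = 0 for every i ∈ V, and equip X with the counting measure. For each pair (i,j) with a_{ij} = 1, set D_j = I_j ∩ X, R_{ij} = {w ∈ I_i : g(w) ∈ I_j ∩ X}, and let f_{ij} : D_j → R_{ij} be the map sending y to the unique point w ∈ I_i with g(w) = y (which exists and is unique since a_{ij} = 1, y ∉ Γ, and g|_{I_i} is injective). Then this data is a relative branching system for the graph G_{A_g} relative to V; explicitly: (1) the sets R_{ij} are pairwise disjoint; (2) the sets D_j are pairwise disjoint; (3) R_{ij} ⊆ I_i ∩ X = D_i; (4) for every i ∈ V with a_{ij} = 1 for at least one j, D_i = ⋃_{j : a_{ij}=1} R_{ij}; and (5) f_{ij} is a bijection from D_j onto R_{ij} whose inverse is the restriction of g to R_{ij}. -/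
open Set Function

section

/-- The domain `⋃_{j<n} I_j` of a Markov interval map, where `I_j = [a j, b j]`
(indices `j = 0, …, n-1` correspond to the intervals `I_1, …, I_n` of the paper). -/
def mDom (n : ℕ) (a b : ℕ → ℝ) : Set ℝ := ⋃ j, ⋃ (_ : j < n), Icc (a j) (b j)

/-- The union of the (possibly empty) escape intervals `E_j = (b j, a (j+1))`,
for `j + 1 < n`. -/
def mEsc (n : ℕ) (a b : ℕ → ℝ) : Set ℝ := ⋃ j, ⋃ (_ : j + 1 < n), Ioo (b j) (a (j + 1))

/-- The set `Γ` of boundary points of the intervals `I_j = [a j, b j]`. -/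
def mGamma (n : ℕ) (a b : ℕ → ℝ) : Set ℝ := {y | ∃ j < n, y = a j ∨ y = b j}

/-- `g^k(x)` is defined: the iterates `x, g(x), …, g^(k-1)(x)` all lie in the domain. -/
def IterDef (g : ℝ → ℝ) (Dm : Set ℝ) (k : ℕ) (x : ℝ) : Prop := ∀ m < k, g^[m] x ∈ Dm

/-- `g` is a Markov interval map for the partition `I_j = [a j, b j]`, `j < n`, of the
interval `I = [a 0, b (n-1)]` minus the escape intervals `E_j = (b j, a (j+1))`:
on each `I_j`, `g` is continuous and strictly monotone, `im g = I`, and `g(I_i) ∩ dom g`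
is a nonempty union of intervals of the partition (Markov property).  (Values of `g`
outside of its domain `⋃_j I_j` are irrelevant.) -/
structure IsMarkovMap (n : ℕ) (a b : ℕ → ℝ) (g : ℝ → ℝ) : Prop where
  two_le : 2 ≤ n
  lt : ∀ j < n, a j < b j
  le : ∀ j, j + 1 < n → b j ≤ a (j + 1)
  mono : ∀ i < n, StrictMonoOn g (Icc (a i) (b i)) ∨ StrictAntiOn g (Icc (a i) (b i))
  cont : ∀ i < n, ContinuousOn g (Icc (a i) (b i))
  im : g '' mDom n a b = Icc (a 0) (b (n - 1))
  markov : ∀ i < n, ∃ S : Finset ℕ, S.Nonempty ∧ (∀ j ∈ S, j < n) ∧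
    g '' Icc (a i) (b i) ∩ mDom n a b = ⋃ j ∈ S, Icc (a j) (b j)

/-- The transition matrix entry `a_{ij} = 1`, i.e. `g(int I_i) ⊇ int I_j`. -/
def TransOne (a b : ℕ → ℝ) (g : ℝ → ℝ) (i j : ℕ) : Prop :=
  Ioo (a j) (b j) ⊆ g '' Ioo (a i) (b i)

/-- Given the final escape point `ex = e(x)` of the orbit of a point `x` of the escape
set, the set `X = {z ∈ I : g^k(z) = e(x)` for some `k ≥ 0}`. -/
def orbitSet (n : ℕ) (a b : ℕ → ℝ) (g : ℝ → ℝ) (ex : ℝ) : Set ℝ :=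
  {z | z ∈ Icc (a 0) (b (n - 1)) ∧ ∃ k, IterDef g (mDom n a b) k z ∧ g^[k] z = ex}

/-- The set `D_j = I_j ∩ X` of the branching system built from an interval map. -/
def Dset (n : ℕ) (a b : ℕ → ℝ) (g : ℝ → ℝ) (ex : ℝ) (j : ℕ) : Set ℝ :=
  Icc (a j) (b j) ∩ orbitSet n a b g ex

/-- The set `R_{ij} = {w ∈ I_i : g w ∈ I_j ∩ X}` of the branching system built from an
interval map. -/
def Rset (n : ℕ) (a b : ℕ → ℝ) (g : ℝ → ℝ) (ex : ℝ) (i j : ℕ) : Set ℝ :=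
  {w | w ∈ Icc (a i) (b i) ∧ g w ∈ Dset n a b g ex j}

theorem aux_lt {n : ℕ} {a b : ℕ → ℝ} {g : ℝ → ℝ} (hg : IsMarkovMap n a b g) (j d : ℕ)
    (h : j + d + 1 < n) : b j ≤ a (j + d + 1) := by
  induction d with
  | zero => exact hg.le j h
  | succ d ih =>
    have h1 := ih (by omega)
    have h2 := hg.lt (j + d + 1) (by omega)
    have h3 := hg.le (j + d + 1) (by omega)
    have e : j + (d + 1) + 1 = j + d + 1 + 1 := by omega
    rw [e]
    linarith

theorem aux_lt' {n : ℕ} {a b : ℕ → ℝ} {g : ℝ → ℝ} (hg : IsMarkovMap n a b g) {j l : ℕ}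
    (h : j < l) (hl : l < n) : b j ≤ a l := by
  obtain ⟨d, rfl⟩ := Nat.exists_eq_add_of_lt h
  exact aux_lt hg j d hl

theorem aux_mem_dom {n : ℕ} {a b : ℕ → ℝ} {y : ℝ} :
    y ∈ mDom n a b ↔ ∃ j, j < n ∧ y ∈ Icc (a j) (b j) := by
  simp only [mDom, Set.mem_iUnion, exists_prop]

theorem aux_sub {n : ℕ} {a b : ℕ → ℝ} {g : ℝ → ℝ} (hg : IsMarkovMap n a b g) {j : ℕ}
    (hj : j < n) : Icc (a j) (b j) ⊆ Icc (a 0) (b (n - 1)) := by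
  intro y hy
  constructor
  · rcases Nat.eq_zero_or_pos j with rfl | h
    · exact hy.1
    · have := aux_lt' hg h hj
      have := hg.lt 0 (by omega)
      linarith [hy.1]
  · rcases Nat.lt_or_ge j (n - 1) with h | h
    · have := aux_lt' hg h (by omega)
      have := hg.lt (n - 1) (by omega)
      linarith [hy.2]
    · have : j = n - 1 := by omega
      rw [← this]; exact hy.2

theorem aux_Ioo_gamma {n : ℕ} {a b : ℕ → ℝ} {g : ℝ → ℝ} (hg : IsMarkovMap n a b g) {j : ℕ}
    (hj : j < n) {y : ℝ} (hy : y ∈ Ioo (a j) (b j)) : y ∉ mGamma n a b := by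
  rintro ⟨l, hl, h⟩
  have h0 := hg.lt l hl
  have h1 := hy.1
  have h2 := hy.2
  rcases lt_trichotomy j l with hjl | rfl | hjl
  · have := aux_lt' hg hjl hl
    rcases h with h | h <;> linarith
  · rcases h with h | h <;> linarith
  · have := aux_lt' hg hjl hj
    rcases h with h | h <;> linarith

theorem aux_E {n : ℕ} {a b : ℕ → ℝ} {g : ℝ → ℝ} (hg : IsMarkovMap n a b g) {k : ℕ}
    (hk : k + 1 < n) {y : ℝ} (hy : y ∈ Ioo (b k) (a (k + 1))) : y ∉ mDom n a b := by
  rw [aux_mem_dom]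
  rintro ⟨l, hl, h⟩
  have h1 := hy.1
  have h2 := hy.2
  have h3 := h.1
  have h4 := h.2
  have h5 := hg.lt l hl
  rcases Nat.lt_or_ge k l with hkl | hkl
  · have : a (k + 1) ≤ a l := by
      rcases Nat.lt_or_ge (k + 1) l with h' | h'
      · have := aux_lt' hg h' hl
        have := hg.lt (k + 1) hk
        linarith
      · have : l = k + 1 := by omega
        rw [this]
    linarith
  · have : b l ≤ b k := by
      rcases Nat.lt_or_ge l k with h' | h'
      · have := aux_lt' hg h' (by omega)
        have := hg.lt k (by omega)
        linarith
      · have : l = k := by omega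
        rw [this]
    linarith

theorem aux_gamma_dom {n : ℕ} {a b : ℕ → ℝ} {g : ℝ → ℝ} (hg : IsMarkovMap n a b g) {y : ℝ}
    (hy : y ∈ mGamma n a b) : y ∈ mDom n a b := by
  obtain ⟨j, hj, h⟩ := hy
  have := hg.lt j hj
  rw [aux_mem_dom]
  refine ⟨j, hj, ?_⟩
  rcases h with rfl | rfl
  · exact ⟨le_rfl, this.le⟩
  · exact ⟨this.le, le_rfl⟩

theorem aux_X {n : ℕ} {a b : ℕ → ℝ} {g : ℝ → ℝ} (hg : IsMarkovMap n a b g)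
    (hΓ : ∀ y ∈ mGamma n a b ∩ mDom n a b, g y ∈ mGamma n a b) {ex : ℝ}
    (hex : ex ∉ mDom n a b) {z : ℝ} (hz : z ∈ orbitSet n a b g ex) : z ∉ mGamma n a b := by
  intro h
  obtain ⟨-, k, -, hk⟩ := hz
  have key : ∀ m, g^[m] z ∈ mGamma n a b := by
    intro m
    induction m with
    | zero => exact h
    | succ m ih =>
      rw [Function.iterate_succ_apply']
      exact hΓ _ ⟨ih, aux_gamma_dom hg ih⟩
  exact hex (hk ▸ aux_gamma_dom hg (key k))

theorem aux_int {n : ℕ} {a b : ℕ → ℝ} {j : ℕ} (hj : j < n) {y : ℝ}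
    (hy : y ∈ Icc (a j) (b j)) (h : y ∉ mGamma n a b) : y ∈ Ioo (a j) (b j) :=
  ⟨lt_of_le_of_ne hy.1 fun e => h ⟨j, hj, Or.inl e.symm⟩,
    lt_of_le_of_ne hy.2 fun e => h ⟨j, hj, Or.inr e⟩⟩

theorem aux_R {n : ℕ} {a b : ℕ → ℝ} {g : ℝ → ℝ} (hg : IsMarkovMap n a b g) {ex : ℝ}
    {i j : ℕ} (hi : i < n) : Rset n a b g ex i j ⊆ Dset n a b g ex i := by
  rintro w ⟨hw, -, -, k, hk, hk'⟩
  refine ⟨hw, aux_sub hg hi hw, k + 1, ?_, hk'⟩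
  intro m hm
  cases m with
  | zero => exact aux_mem_dom.2 ⟨i, hi, hw⟩
  | succ m => exact hk m (by omega)

theorem aux_D {n : ℕ} {a b : ℕ → ℝ} {g : ℝ → ℝ} (hg : IsMarkovMap n a b g)
    (hΓ : ∀ y ∈ mGamma n a b ∩ mDom n a b, g y ∈ mGamma n a b) {ex : ℝ}
    (hex : ex ∉ mDom n a b) {j l : ℕ} (hj : j < n) (hl : l < n) {z : ℝ}
    (h1 : z ∈ Dset n a b g ex j) (h2 : z ∈ Dset n a b g ex l) : j = l := by
  have hz := aux_X hg hΓ hex h1.2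
  have h1 := aux_int hj h1.1 hz
  have h2 := aux_int hl h2.1 hz
  rcases lt_trichotomy j l with h | h | h
  · have := aux_lt' hg h hl
    linarith [h1.2, h2.1]
  · exact h
  · have := aux_lt' hg h hj
    linarith [h2.2, h1.1]

theorem aux_inj {n : ℕ} {a b : ℕ → ℝ} {g : ℝ → ℝ} (hg : IsMarkovMap n a b g) {i : ℕ}
    (hi : i < n) : InjOn g (Icc (a i) (b i)) := by
  rcases hg.mono i hi with h | h
  · exact h.injOn
  · exact h.injOn

/-- Let `g` be a Markov interval map with `g(Γ ∩ dom g) ⊆ Γ`, `x ∈ E_g`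
with final escape point `ex = g^[τx] x ∈ E_{kι}`, and `V ⊆ {1,…,n}` with `â_{i ι(x)} = 0`
for every `i ∈ V`.  With `X` equipped with the counting measure, the data
`D_j = I_j ∩ X`, `R_{ij} = {w ∈ I_i : g w ∈ I_j ∩ X}` and `f_{ij} = (g|_{I_i})⁻¹|_{D_j}`
is a relative branching system for the graph `G_{A_g}` relative to `V`:  (1) the `R_{ij}`
are pairwise disjoint;  (2) the `D_j` are pairwise disjoint;  (3) `R_{ij} ⊆ D_i`;
(4) for `i ∈ V` emitting at least one edge, `D_i = ⋃_{j : a_{ij} = 1} R_{ij}`;  and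
(5) each `y ∈ D_j` has a unique `g`-preimage in `I_i` (so that `f_{ij}` is well defined)
and `g` restricts to a bijection from `R_{ij}` onto `D_j` (so that `f_{ij}` is a bijection
from `D_j` onto `R_{ij}` whose inverse is the restriction of `g` to `R_{ij}`). -/
theorem statement12 (n : ℕ) (a b : ℕ → ℝ) (g : ℝ → ℝ) (hg : IsMarkovMap n a b g)
    (hΓ : ∀ y ∈ mGamma n a b ∩ mDom n a b, g y ∈ mGamma n a b)
    (x : ℝ) (hxI : x ∈ Icc (a 0) (b (n - 1)))
    (τx : ℕ) (hτ1 : 1 ≤ τx) (hτdef : IterDef g (mDom n a b) τx x)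
    (hτesc : g^[τx] x ∈ mEsc n a b)
    (hτmin : ∀ k, 1 ≤ k → IterDef g (mDom n a b) k x → g^[k] x ∈ mEsc n a b → τx ≤ k)
    (kι : ℕ) (hkι : kι + 1 < n) (hexE : g^[τx] x ∈ Ioo (b kι) (a (kι + 1)))
    (V : Set ℕ) (hVn : ∀ i ∈ V, i < n)
    (hV0 : ∀ i ∈ V, Ioo (a i) (b i) ∩ g ⁻¹' (Ioo (b kι) (a (kι + 1))) = ∅) :
    (∀ i j k l, i < n → j < n → k < n → l < n →
      TransOne a b g i j → TransOne a b g k l → (i, j) ≠ (k, l) →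
      Rset n a b g (g^[τx] x) i j ∩ Rset n a b g (g^[τx] x) k l = ∅) ∧
    (∀ j l, j < n → l < n → j ≠ l →
      Dset n a b g (g^[τx] x) j ∩ Dset n a b g (g^[τx] x) l = ∅) ∧
    (∀ i j, i < n → j < n → TransOne a b g i j →
      Rset n a b g (g^[τx] x) i j ⊆ Dset n a b g (g^[τx] x) i) ∧
    (∀ i ∈ V, (∃ j, j < n ∧ TransOne a b g i j) →
      Dset n a b g (g^[τx] x) i =
        ⋃ j, ⋃ (_ : j < n ∧ TransOne a b g i j), Rset n a b g (g^[τx] x) i j) ∧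
    (∀ i j, i < n → j < n → TransOne a b g i j →
      (∀ y ∈ Dset n a b g (g^[τx] x) j, ∃! w, w ∈ Icc (a i) (b i) ∧ g w = y) ∧
      Set.BijOn g (Rset n a b g (g^[τx] x) i j) (Dset n a b g (g^[τx] x) j)) := by
  have hex := aux_E hg hkι hexE
  generalize g^[τx] x = ex at hexE hex
  have hpre : ∀ i j, i < n → j < n → TransOne a b g i j → ∀ y ∈ Dset n a b g ex j,
      ∃ w, w ∈ Icc (a i) (b i) ∧ g w = y := by
    intro i j hi hj hT y hy
    obtain ⟨w, hw, e⟩ := hT (aux_int hj hy.1 (aux_X hg hΓ hex hy.2))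
    exact ⟨w, Ioo_subset_Icc_self hw, e⟩
  refine ⟨?_, ?_, ?_, ?_, ?_⟩
  · intro i j k l hi hj hk hl _ _ hne
    rw [Set.eq_empty_iff_forall_notMem]
    rintro w ⟨h1, h2⟩
    have e1 := aux_D hg hΓ hex hi hk (aux_R hg hi h1) (aux_R hg hk h2)
    have e2 := aux_D hg hΓ hex hj hl h1.2 h2.2
    exact hne (by rw [e1, e2])
  · intro j l hj hl hne
    rw [Set.eq_empty_iff_forall_notMem]
    rintro w ⟨h1, h2⟩
    exact hne (aux_D hg hΓ hex hj hl h1 h2)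
  · intro i j hi _ _
    exact aux_R hg hi
  · intro i hiV _
    have hi := hVn i hiV
    apply Set.Subset.antisymm
    · intro z hz
      have hzint := aux_int hi hz.1 (aux_X hg hΓ hex hz.2)
      have hzdom : z ∈ mDom n a b := aux_mem_dom.2 ⟨i, hi, hz.1⟩
      have hgI : g z ∈ Icc (a 0) (b (n - 1)) := hg.im ▸ Set.mem_image_of_mem g hzdom
      obtain ⟨hzI, -, k, hk, hke⟩ := hz
      cases k with
      | zero =>
        have hke : z = ex := hke
        exact absurd (hke ▸ hzdom) hex
      | succ k =>
        rw [Function.iterate_succ_apply] at hke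
        have hgX : g z ∈ orbitSet n a b g ex :=
          ⟨hgI, k, fun m hm => by
            have := hk (m + 1) (by omega)
            rwa [Function.iterate_succ_apply] at this, hke⟩
        cases k with
        | zero =>
          have hke : g z = ex := hke
          have : z ∈ Ioo (a i) (b i) ∩ g ⁻¹' (Ioo (b kι) (a (kι + 1))) :=
            ⟨hzint, by rw [Set.mem_preimage, hke]; exact hexE⟩
          rw [hV0 i hiV] at this
          exact absurd this (Set.notMem_empty z)
        | succ k =>
          have hgd : g z ∈ mDom n a b := hk 1 (by omega)
          obtain ⟨S, -, hS, hSe⟩ := hg.markov i hi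
          have hmem : g z ∈ ⋃ j ∈ S, Icc (a j) (b j) :=
            hSe ▸ ⟨Set.mem_image_of_mem g hzI, hgd⟩
          simp only [Set.mem_iUnion] at hmem
          obtain ⟨j, hjS, hj⟩ := hmem
          have hjn := hS j hjS
          simp only [Set.mem_iUnion]
          refine ⟨j, ⟨hjn, ?_⟩, hzI, hj, hgX⟩
          intro y hy
          have hy' : y ∈ g '' Icc (a i) (b i) ∩ mDom n a b := by
            rw [hSe]
            simp only [Set.mem_iUnion]
            exact ⟨j, hjS, Ioo_subset_Icc_self hy⟩
          obtain ⟨⟨w, hw, hwy⟩, -⟩ := hy'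
          refine ⟨w, aux_int hi hw ?_, hwy⟩
          intro hwΓ
          exact aux_Ioo_gamma hg hjn hy (hwy ▸ hΓ w ⟨hwΓ, aux_gamma_dom hg hwΓ⟩)
    · intro z hz
      simp only [Set.mem_iUnion] at hz
      obtain ⟨j, _, h⟩ := hz
      exact aux_R hg hi h
  · intro i j hi hj hT
    refine ⟨?_, ?_, ?_, ?_⟩
    · intro y hy
      obtain ⟨w, hw, e⟩ := hpre i j hi hj hT y hy
      exact ⟨w, ⟨hw, e⟩, fun w' h' => aux_inj hg hi h'.1 hw (h'.2.trans e.symm)⟩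
    · intro w hw
      exact hw.2
    · intro w hw w' hw' e
      exact aux_inj hg hi hw.1 hw'.1 e
    · intro y hy
      obtain ⟨w, hw, e⟩ := hpre i j hi hj hT y hy
      exact ⟨w, ⟨hw, e ▸ hy⟩, e⟩

end
end
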